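/- arXiv:1501.05636 — 2 statements merged into one kernel-verified Lean document; each statement's English description precedes it below -/
import Mathlib

section
/- Let ρ_ABC be a positive definite density matrix (positive definite with trace 1) on the tensor product of finite-dimensional complex Hilbert spaces H_A ⊗ H_B ⊗ H_C. Then for every α ∈ (1,2), Tr{ ( ρ_AC^{(1−α)/2} ρ_C^{(α−1)/2} ρ_BC^{1−α} ρ_C^{(α−1)/2} ρ_AC^{(1−α)/2} )^{1/(1−α)} } ≤ 1. -/
open scoped ComplexOrder Matrix

/-- Real power of a Hermitian matrix, taken on its support:
for `A = ∑ᵢ λᵢ |i⟩⟨i|`, `mpow A t = ∑_{i : λᵢ ≠ 0} λᵢ^t |i⟩⟨i|`.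
(For non-Hermitian input we return the junk value `0`.) -/
noncomputable def mpow {n : Type*} [Fintype n] [DecidableEq n]
    (A : Matrix n n ℂ) (t : ℝ) : Matrix n n ℂ :=
  if h : A.IsHermitian then
    (h.eigenvectorUnitary : Matrix n n ℂ) *
      Matrix.diagonal (fun i => ((if h.eigenvalues i = 0 then (0:ℝ)
        else (h.eigenvalues i) ^ t) : ℂ)) *
      (star h.eigenvectorUnitary : Matrix n n ℂ)
  else 0

/-- The reduced matrix `ρ_AC` of a tripartite matrix, viewed as the operator
`ρ_AC ⊗ I_B` on the full space. -/
noncomputable def redAC {dA dB dC : ℕ}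
    (ρ : Matrix (Fin dA × Fin dB × Fin dC) (Fin dA × Fin dB × Fin dC) ℂ) :
    Matrix (Fin dA × Fin dB × Fin dC) (Fin dA × Fin dB × Fin dC) ℂ :=
  fun x y => (if x.2.1 = y.2.1 then (1:ℂ) else 0) *
    ∑ m : Fin dB, ρ (x.1, m, x.2.2) (y.1, m, y.2.2)

/-- The reduced matrix `ρ_BC` of a tripartite matrix, viewed as the operator
`I_A ⊗ ρ_BC` on the full space. -/
noncomputable def redBC {dA dB dC : ℕ}
    (ρ : Matrix (Fin dA × Fin dB × Fin dC) (Fin dA × Fin dB × Fin dC) ℂ) :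
    Matrix (Fin dA × Fin dB × Fin dC) (Fin dA × Fin dB × Fin dC) ℂ :=
  fun x y => (if x.1 = y.1 then (1:ℂ) else 0) * ∑ m : Fin dA, ρ (m, x.2) (m, y.2)

/-- The reduced matrix `ρ_C` of a tripartite matrix, viewed as the operator
`I_A ⊗ I_B ⊗ ρ_C` on the full space. -/
noncomputable def redC {dA dB dC : ℕ}
    (ρ : Matrix (Fin dA × Fin dB × Fin dC) (Fin dA × Fin dB × Fin dC) ℂ) :
    Matrix (Fin dA × Fin dB × Fin dC) (Fin dA × Fin dB × Fin dC) ℂ :=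
  fun x y => (if x.1 = y.1 then (1:ℂ) else 0) * (if x.2.1 = y.2.1 then (1:ℂ) else 0) *
    ∑ m : Fin dA, ∑ l : Fin dB, ρ (m, l, x.2.2) (m, l, y.2.2)

/-!
Put `s = α - 1` and `G z = ρ_AC ^ (z/2) ρ_C ^ (-z/2) ρ_BC ^ (z/2)`. The sandwiched product is the
inverse of `G s (G s)ᴴ`, so the trace to be bounded is `tr (G s (G s)ᴴ) ^ (1/s)`, the Schatten
`2/s`-norm of `G s` to the power `2/s`. On `re z = 0` the family `G` is unitary. On `re z = 1` its
squared Hilbert–Schmidt norm is `tr (ρ_AC ρ_C ^ (-w) ρ_BC ρ_C ^ (-w̄))` with `re w = 1/2`. Since the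
partial trace over `B` is self-adjoint for the trace pairing and is linear over operators acting
trivially on `B`, this equals `tr (ρ ρ_C ^ (-w) ρ_C ρ_C ^ (-w̄)) = tr ρ`. Stein interpolation
between the two lines gives the bound `tr ρ` at `z = s`.
-/

section ComplexPower

variable {𝓐 : Type*} [CStarAlgebra 𝓐]

/-- The complex power `a ^ z = exp (z log a)` of a strictly positive element `a` of a C⋆-algebra.
As `CFC.log` takes a junk value on elements that are not self-adjoint, and `Real.log` one at
nonpositive reals, only strictly positive `a` are meaningful. -/
noncomputable def cpow (a : 𝓐) (z : ℂ) : 𝓐 :=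
  NormedSpace.exp (z • CFC.log a)

lemma cpow_zero (a : 𝓐) : cpow a 0 = 1 := by
  rw [cpow, zero_smul, NormedSpace.exp_zero]

lemma cpow_add (a : 𝓐) (z w : ℂ) : cpow a (z + w) = cpow a z * cpow a w := by
  let _ : NormedAlgebra ℚ 𝓐 := .restrictScalars ℚ ℂ 𝓐
  rw [cpow, add_smul]
  exact NormedSpace.exp_add_of_commute (((Commute.refl _).smul_left z).smul_right w)

lemma cpow_mul_cpow_cancel (a : 𝓐) {z w : ℂ} (h : z + w = 0) : cpow a z * cpow a w = 1 := by
  rw [← cpow_add, h, cpow_zero]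

lemma isUnit_cpow (a : 𝓐) (z : ℂ) : IsUnit (cpow a z) :=
  isUnit_iff_exists.2 ⟨cpow a (-z), cpow_mul_cpow_cancel a (add_neg_cancel z),
    cpow_mul_cpow_cancel a (neg_add_cancel z)⟩

lemma star_cpow (a : 𝓐) (z : ℂ) : star (cpow a z) = cpow a (star z) := by
  rw [cpow, NormedSpace.star_exp, star_smul, IsSelfAdjoint.log.star_eq, cpow]

lemma star_cpow_mul_cpow (a : 𝓐) (z : ℂ) :
    star (cpow a z) * cpow a z = cpow a ((2 * z.re : ℝ) : ℂ) := by
  rw [star_cpow, ← cpow_add, add_comm]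
  exact congrArg (cpow a) (Complex.add_conj z)

lemma cpow_mem_unitary (a : 𝓐) {z : ℂ} (hz : z.re = 0) : cpow a z ∈ unitary 𝓐 := by
  have hstar : star z + z = 0 := by rw [add_comm]; exact (Complex.add_conj z).trans (by simp [hz])
  rw [Unitary.mem_iff, star_cpow]
  exact ⟨cpow_mul_cpow_cancel a hstar, cpow_mul_cpow_cancel a (by rw [add_comm, hstar])⟩

lemma cpow_cpow (a : 𝓐) (t : ℝ) (z : ℂ) : cpow (cpow a t) z = cpow a (z * t) := by
  have hlog : CFC.log (cpow a t) = (t : ℂ) • CFC.log a :=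
    CFC.log_exp _ (IsSelfAdjoint.smul (Complex.conj_ofReal t) .log)
  rw [cpow, hlog, smul_smul, cpow]

lemma cpow_commute {a b : 𝓐} (h : Commute a b) (z : ℂ) : Commute (cpow a z) b :=
  ((h.cfc_real Real.log).smul_left z).exp_left

lemma differentiable_cpow (a : 𝓐) : Differentiable ℂ (cpow a) := fun z =>
  (hasDerivAt_exp_smul_const (CFC.log a) z).differentiableAt

section Order

variable [PartialOrder 𝓐] [StarOrderedRing 𝓐]

lemma cpow_one {a : 𝓐} (ha : IsStrictlyPositive a) : cpow a 1 = a := by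
  rw [cpow, one_smul, CFC.exp_log a]

lemma isStrictlyPositive_cpow_ofReal (a : 𝓐) (t : ℝ) : IsStrictlyPositive (cpow a t) := by
  rw [← mul_div_cancel₀ t two_ne_zero, ← Complex.ofReal_re (t / 2), ← star_cpow_mul_cpow]
  exact ((isUnit_cpow a _).star.mul (isUnit_cpow a _)).isStrictlyPositive (star_mul_self_nonneg _)

/-- `yᴴ (y yᴴ) ^ (-1/2)` is the unitary factor of the polar decomposition of `yᴴ`. -/
lemma star_mul_self_star_mul_cpow {y : 𝓐} (hy : IsStrictlyPositive (y * star y)) (w : ℂ) :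
    star (star y * cpow (y * star y) (w - 1 / 2)) * (star y * cpow (y * star y) (w - 1 / 2)) =
      cpow (y * star y) ((2 * w.re : ℝ) : ℂ) := by
  set p := y * star y with hp
  calc star (star y * cpow p (w - 1 / 2)) * (star y * cpow p (w - 1 / 2))
      = cpow p (star (w - 1 / 2)) * p * cpow p (w - 1 / 2) := by
        rw [star_mul, star_star, star_cpow, hp]; simp only [mul_assoc]
    _ = cpow p (star (w - 1 / 2) + 1 + (w - 1 / 2)) := by
        rw [cpow_add, cpow_add, cpow_one hy]
    _ = cpow p ((2 * w.re : ℝ) : ℂ) := by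
        congr 1
        apply Complex.ext
        · simp; ring
        · simp

end Order

end ComplexPower

section Strip

open Complex.HadamardThreeLines

/-- The analytic families of Stein interpolation on the strip `0 ≤ re z ≤ 1`: holomorphic in the
interior, continuous and bounded up to the boundary. -/
structure IsSteinFamily {E : Type*} [NormedAddCommGroup E] [NormedSpace ℂ E] (f : ℂ → E) :
    Prop where
  diffContOnCl : DiffContOnCl ℂ f (verticalStrip 0 1)
  bddAbove : BddAbove ((norm ∘ f) '' verticalClosedStrip 0 1)

namespace IsSteinFamily

lemma const {E : Type*} [NormedAddCommGroup E] [NormedSpace ℂ E] (c : E) :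
    IsSteinFamily fun _ : ℂ => c where
  diffContOnCl := diffContOnCl_const
  bddAbove := ⟨‖c‖, by rintro _ ⟨z, -, rfl⟩; exact le_rfl⟩

lemma mul {R : Type*} [NormedRing R] [NormedAlgebra ℂ R] {f g : ℂ → R} (hf : IsSteinFamily f)
    (hg : IsSteinFamily g) : IsSteinFamily fun z => f z * g z where
  diffContOnCl := ⟨hf.1.differentiableOn.mul hg.1.differentiableOn,
    hf.1.continuousOn.mul hg.1.continuousOn⟩
  bddAbove := by
    obtain ⟨K, hK⟩ := hf.bddAbove
    obtain ⟨L, hL⟩ := hg.bddAbove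
    refine ⟨K * L, ?_⟩
    rintro _ ⟨z, hz, rfl⟩
    have hfz : ‖f z‖ ≤ K := hK ⟨z, hz, rfl⟩
    have hgz : ‖g z‖ ≤ L := hL ⟨z, hz, rfl⟩
    calc ‖f z * g z‖ ≤ ‖f z‖ * ‖g z‖ := norm_mul_le _ _
      _ ≤ K * L := by gcongr; exact (norm_nonneg _).trans hfz

lemma clm_comp {E F : Type*} [NormedAddCommGroup E] [NormedSpace ℂ E] [NormedAddCommGroup F]
    [NormedSpace ℂ F] (T : E →L[ℂ] F) {f : ℂ → E} (hf : IsSteinFamily f) :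
    IsSteinFamily fun z => T (f z) where
  diffContOnCl := T.differentiable.comp_diffContOnCl hf.1
  bddAbove := by
    obtain ⟨K, hK⟩ := hf.bddAbove
    refine ⟨‖T‖ * K, ?_⟩
    rintro _ ⟨z, hz, rfl⟩
    exact T.le_opNorm_of_le (hK ⟨z, hz, rfl⟩)

/-- By the C⋆-identity `‖a ^ w‖ ^ 2 = ‖a ^ (2 re w)‖`, which is continuous in `re w`. -/
lemma cpow_affine {𝓐 : Type*} [CStarAlgebra 𝓐] (a : 𝓐) (b c : ℝ) :
    IsSteinFamily fun z => cpow a (b * z + c) where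
  diffContOnCl := ((differentiable_cpow a).comp (by fun_prop)).diffContOnCl
  bddAbove := by
    have hcont : Continuous fun x : ℝ => ‖cpow a ((2 * (b * x + c) : ℝ) : ℂ)‖ :=
      ((differentiable_cpow a).continuous.comp (by fun_prop)).norm
    obtain ⟨K, hK⟩ := (isCompact_Icc (a := (0 : ℝ)) (b := 1)).bddAbove_image hcont.continuousOn
    refine ⟨√K, ?_⟩
    rintro _ ⟨z, hz, rfl⟩
    refine Real.le_sqrt_of_sq_le ?_
    calc ‖cpow a (b * z + c)‖ ^ 2
        = ‖cpow a ((2 * (b * z.re + c) : ℝ) : ℂ)‖ := by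
          rw [sq, ← CStarRing.norm_star_mul_self, star_cpow_mul_cpow]
          simp
      _ ≤ K := hK ⟨z.re, hz, rfl⟩

end IsSteinFamily

end Strip

section Trace

variable {n : Type*} [Fintype n]

lemma norm_trace_mul_le (M N : Matrix n n ℂ) :
    ‖(M * N).trace‖ ≤ √(star M * M).trace.re * √(star N * N).trace.re := by
  classical
  let _ := Matrix.toMatrixSeminormedAddCommGroup (1 : Matrix n n ℂ) .one
  let _ := Matrix.toMatrixInnerProductSpace (1 : Matrix n n ℂ) .one
  have inner_eq (x y : Matrix n n ℂ) : inner ℂ x y = (y * 1 * star x).trace := rfl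
  have norm_eq (x : Matrix n n ℂ) : ‖x‖ = √(star x * x).trace.re := by
    rw [norm_eq_sqrt_re_inner (𝕜 := ℂ), inner_eq, Matrix.mul_one, Matrix.trace_mul_comm]
    rfl
  calc ‖(M * N).trace‖ = ‖inner ℂ (star N) M‖ := by
        rw [inner_eq, Matrix.mul_one, star_star]
    _ ≤ ‖star N‖ * ‖M‖ := norm_inner_le_norm _ _
    _ = √(star M * M).trace.re * √(star N * N).trace.re := by
        rw [norm_eq, norm_eq, star_star, Matrix.trace_mul_comm N, mul_comm]

open scoped MatrixOrder in
lemma trace_star_mul_self_le_of_contraction [DecidableEq n] {G : Matrix n n ℂ}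
    (hG : star G * G ≤ 1) (W : Matrix n n ℂ) :
    (star (G * W) * (G * W)).trace ≤ (star W * W).trace := by
  have hconj : star W * (star G * G) * W ≤ star W * 1 * W := star_left_conjugate_le_conjugate hG W
  rw [star_mul, mul_assoc, ← mul_assoc (star G), ← mul_assoc (star W)]
  rw [← sub_nonneg, ← Matrix.trace_sub]
  simpa only [mul_one] using (Matrix.le_iff.1 hconj).trace_nonneg

end Trace

lemma le_of_le_rpow_mul_rpow {T τ s : ℝ} (hτ : 0 ≤ τ) (hT : 0 ≤ T) (hs : 0 < s)
    (h : T ≤ T ^ (1 - s) * (√τ * √T) ^ s) : T ≤ τ := by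
  rcases hT.eq_or_lt with rfl | hT
  · exact hτ
  have hT' : T ^ (1 - s) * T ^ s ≤ T ^ (1 - s) * (√τ * √T) ^ s := by
    rwa [← Real.rpow_add hT, sub_add_cancel, Real.rpow_one]
  have hsqrt : √T * √T ≤ √τ * √T := by
    rw [Real.mul_self_sqrt hT.le]
    exact (Real.rpow_le_rpow_iff hT.le (by positivity) hs).1
      (le_of_mul_le_mul_left hT' (Real.rpow_pos_of_pos hT _))
  exact (Real.sqrt_le_sqrt_iff hτ).1 (le_of_mul_le_mul_right hsqrt (Real.sqrt_pos.2 hT))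

section Interpolation

open scoped MatrixOrder Matrix.Norms.L2Operator

variable {n : Type*} [Fintype n] [DecidableEq n]

lemma trace_cpow_ofReal_nonneg (P : Matrix n n ℂ) (t : ℝ) : 0 ≤ (cpow P t).trace :=
  (Matrix.nonneg_iff_posSemidef.1 (isStrictlyPositive_cpow_ofReal P t).nonneg).trace_nonneg

lemma norm_trace_mul_star_mul_cpow_le {y : Matrix n n ℂ} (hy : IsStrictlyPositive (y * star y))
    (H : Matrix n n ℂ) (w : ℂ) :
    ‖(H * (star y * cpow (y * star y) (w - 1 / 2))).trace‖ ≤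
      √(star H * H).trace.re * √(cpow (y * star y) ((2 * w.re : ℝ) : ℂ)).trace.re := by
  rw [← star_mul_self_star_mul_cpow hy w]
  exact norm_trace_mul_le _ _

lemma norm_trace_mul_star_mul_cpow_le_of_contraction {y : Matrix n n ℂ}
    (hy : IsStrictlyPositive (y * star y)) {K : Matrix n n ℂ} (hK : star K * K ≤ 1) (w : ℂ) :
    ‖(K * (star y * cpow (y * star y) (w - 1 / 2))).trace‖ ≤
      (cpow (y * star y) (w.re : ℂ)).trace.re := by
  set P := y * star y
  set t : ℝ := w.re / 2
  set W := star y * cpow P ((w - t) - 1 / 2)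
  -- Both factors of this splitting have squared Hilbert–Schmidt norm at most `tr P ^ (re w)`.
  have hsplit : K * (star y * cpow P (w - 1 / 2)) = K * W * cpow P t := by
    rw [show w - 1 / 2 = (w - t) - 1 / 2 + t by ring, cpow_add]
    simp only [W, mul_assoc]
  have hKW : (star (K * W) * (K * W)).trace.re ≤ (cpow P (w.re : ℂ)).trace.re := by
    have hW : star W * W = cpow P (w.re : ℂ) := by
      rw [star_mul_self_star_mul_cpow hy, Complex.sub_re, Complex.ofReal_re]
      congr 2
      ring
    rw [← hW]
    exact (Complex.le_def.1 (trace_star_mul_self_le_of_contraction hK W)).1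
  have hPt : star (cpow P t) * cpow P t = cpow P (w.re : ℂ) := by
    rw [star_cpow_mul_cpow, Complex.ofReal_re, mul_div_cancel₀ _ two_ne_zero]
  calc ‖(K * (star y * cpow P (w - 1 / 2))).trace‖
      ≤ √(star (K * W) * (K * W)).trace.re * √(star (cpow P t) * cpow P t).trace.re := by
        rw [hsplit]; exact norm_trace_mul_le _ _
    _ ≤ √(cpow P (w.re : ℂ)).trace.re * √(cpow P (w.re : ℂ)).trace.re := by
        rw [hPt]; gcongr
    _ = (cpow P (w.re : ℂ)).trace.re :=
        Real.mul_self_sqrt (Complex.le_def.1 (trace_cpow_ofReal_nonneg P w.re)).1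

/-- The family `yᴴ (y yᴴ) ^ ((2 - z) / (2 s) - 1 / 2)` against which a Stein family `G` with
`y = G s` is paired in the three lines theorem. The exponent is chosen so that the pairing at `s` is
`tr (y yᴴ) ^ (1 / s)`, and so that Hölder's inequality recovers powers of this same trace on both
boundary lines. -/
noncomputable def dualFamily (y : Matrix n n ℂ) (s : ℝ) (z : ℂ) : Matrix n n ℂ :=
  star y * cpow (y * star y) ((2 - z) / ((2 * s : ℝ) : ℂ) - 1 / 2)

lemma isSteinFamily_dualFamily (y : Matrix n n ℂ) (s : ℝ) : IsSteinFamily (dualFamily y s) := by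
  have hdual : dualFamily y s = fun z => star y *
      cpow (y * star y) ((-(2 * s)⁻¹ : ℝ) * z + (2 * (2 * s)⁻¹ - 1 / 2 : ℝ)) := by
    funext z
    rw [dualFamily]
    congr 2
    push_cast
    ring
  rw [hdual]
  exact (IsSteinFamily.const (star y)).mul (IsSteinFamily.cpow_affine _ _ _)

lemma mul_dualFamily {y : Matrix n n ℂ} (hy : IsStrictlyPositive (y * star y)) {s : ℝ}
    (hs : s ≠ 0) : y * dualFamily y s s = cpow (y * star y) ((1 / s : ℝ) : ℂ) := by
  have hexp : ((1 / s : ℝ) : ℂ) = 1 + ((2 - s) / ((2 * s : ℝ) : ℂ) - 1 / 2) := by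
    have hs' : (s : ℂ) ≠ 0 := Complex.ofReal_ne_zero.2 hs
    push_cast
    field_simp
    ring
  rw [hexp, cpow_add, cpow_one hy, dualFamily, ← mul_assoc]

theorem IsSteinFamily.trace_cpow_le {G : ℂ → Matrix n n ℂ} (hG : IsSteinFamily G) {s : ℝ} {τ : ℂ}
    (hs : s ∈ Set.Ioc 0 1) (h0 : ∀ z : ℂ, z.re = 0 → star (G z) * G z ≤ 1)
    (h1 : ∀ z : ℂ, z.re = 1 → (star (G z) * G z).trace ≤ τ)
    (hGs : IsStrictlyPositive (G s * star (G s))) :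
    (cpow (G s * star (G s)) ((1 / s : ℝ) : ℂ)).trace ≤ τ := by
  set T := (cpow (G s * star (G s)) ((1 / s : ℝ) : ℂ)).trace with hTdef
  have hT : 0 ≤ T := trace_cpow_ofReal_nonneg _ _
  have hτ : 0 ≤ τ :=
    (Matrix.posSemidef_conjTranspose_mul_self (G 1)).trace_nonneg.trans (h1 1 Complex.one_re)
  let F : ℂ → ℂ := fun z => (G z * dualFamily (G s) s z).trace
  have hF : IsSteinFamily F := (hG.mul (isSteinFamily_dualFamily _ s)).clm_comp
    (LinearMap.toContinuousLinearMap (Matrix.traceLinearMap n ℂ ℂ))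
  have exponent_re (z : ℂ) : ((2 - z) / ((2 * s : ℝ) : ℂ)).re = (2 - z.re) / (2 * s) := by
    rw [Complex.div_ofReal_re, Complex.sub_re, Complex.re_ofNat]
  have hF0 : ∀ z ∈ Complex.re ⁻¹' {0}, ‖F z‖ ≤ T.re := fun z hz => by
    have := norm_trace_mul_star_mul_cpow_le_of_contraction hGs (h0 z hz) ((2 - z) / (2 * s : ℝ))
    rwa [exponent_re, show z.re = 0 from hz, sub_zero, div_mul_cancel_left₀ two_ne_zero,
      ← one_div] at this
  have hF1 : ∀ z ∈ Complex.re ⁻¹' {1}, ‖F z‖ ≤ √τ.re * √T.re := fun z hz => by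
    have := norm_trace_mul_star_mul_cpow_le hGs (G z) ((2 - z) / (2 * s : ℝ))
    rw [exponent_re, show z.re = 1 from hz, show 2 * ((2 - 1) / (2 * s)) = 1 / s by ring] at this
    exact this.trans (by gcongr; exact h1 z hz)
  refine Complex.le_def.2 ⟨?_, (Complex.le_def.1 hT).2.symm.trans (Complex.le_def.1 hτ).2⟩
  refine le_of_le_rpow_mul_rpow (Complex.le_def.1 hτ).1 (Complex.le_def.1 hT).1 hs.1 ?_
  calc T.re ≤ ‖F s‖ := by rw [hTdef, ← mul_dualFamily hGs hs.1.ne']; exact Complex.re_le_norm _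
    _ ≤ T.re ^ (1 - s) * (√τ.re * √T.re) ^ s :=
      Complex.HadamardThreeLines.norm_le_interp_of_mem_verticalClosedStrip₀₁' F
        ⟨hs.1.le, hs.2⟩ hF.diffContOnCl hF.bddAbove hF0 hF1

end Interpolation

section Sandwich

open scoped MatrixOrder Matrix.Norms.L2Operator

variable {n : Type*} [Fintype n] [DecidableEq n]

lemma mpow_eq_cpow {A : Matrix n n ℂ} (hA : A.PosDef) (t : ℝ) : mpow A t = cpow A t := by
  have hpos (i : n) : 0 < hA.1.eigenvalues i := hA.eigenvalues_pos i
  have hcont (f : ℝ → ℝ) : ContinuousOn f (spectrum ℝ A) := A.finite_real_spectrum.continuousOn f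
  have hcfc : cpow A t = cfc (fun x => Real.exp (t * Real.log x)) A := by
    rw [cfc_comp' Real.exp (fun x => t * Real.log x) A Real.continuous_exp.continuousOn (hcont _),
      cfc_const_mul t Real.log A (hcont _), CFC.real_exp_eq_normedSpace_exp]
    rfl
  -- `mpow` raises complex numbers to a real power, which is the power of the C⋆-algebra `ℂ`.
  have hpow (i : n) : (hA.1.eigenvalues i : ℂ) ^ t =
      (Real.exp (t * Real.log (hA.1.eigenvalues i)) : ℝ) := by
    rw [mul_comm, ← Real.rpow_def_of_pos (hpos i)]
    exact CFC.rpow_algebraMap (A := ℂ) (x := ⟨_, (hpos i).le⟩) (y := t)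
  rw [hcfc, hA.1.cfc_eq, Matrix.IsHermitian.cfc, Unitary.conjStarAlgAut_apply, mpow, dif_pos hA.1]
  congr 3
  ext i
  rw [if_neg (hpos i).ne', hpow]
  rfl

/-- The family `A ^ (z/2) C ^ (-z/2) B ^ (z/2)`, a square root of the inverse of the sandwiched
product `A ^ (-s/2) C ^ (s/2) B ^ (-s) C ^ (s/2) A ^ (-s/2)` at real points `z = s`. -/
noncomputable def sandwichFamily (A B C : Matrix n n ℂ) (z : ℂ) : Matrix n n ℂ :=
  cpow A (z / 2) * cpow C (-(z / 2)) * cpow B (z / 2)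

variable (A B C : Matrix n n ℂ)

lemma isSteinFamily_sandwichFamily : IsSteinFamily (sandwichFamily A B C) := by
  have hplus (M : Matrix n n ℂ) : IsSteinFamily fun z => cpow M (z / 2) := by
    simpa [div_eq_inv_mul] using IsSteinFamily.cpow_affine M (1 / 2) 0
  have hminus (M : Matrix n n ℂ) : IsSteinFamily fun z => cpow M (-(z / 2)) := by
    simpa [div_eq_inv_mul] using IsSteinFamily.cpow_affine M (-(1 / 2)) 0
  exact ((hplus A).mul (hminus C)).mul (hplus B)

lemma isStrictlyPositive_sandwichFamily_mul_star (z : ℂ) :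
    IsStrictlyPositive (sandwichFamily A B C z * star (sandwichFamily A B C z)) := by
  have hunit : IsUnit (sandwichFamily A B C z) :=
    ((isUnit_cpow A _).mul (isUnit_cpow C _)).mul (isUnit_cpow B _)
  exact (hunit.mul hunit.star).isStrictlyPositive (mul_star_self_nonneg _)

lemma sandwichFamily_mem_unitary {z : ℂ} (hz : z.re = 0) :
    sandwichFamily A B C z ∈ unitary (Matrix n n ℂ) := by
  have hz2 : (z / 2).re = 0 := by rw [Complex.div_ofNat_re, hz, zero_div]
  have hz2' : (-(z / 2)).re = 0 := by rw [Complex.neg_re, hz2, neg_zero]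
  exact mul_mem (mul_mem (cpow_mem_unitary A hz2) (cpow_mem_unitary C hz2'))
    (cpow_mem_unitary B hz2)

variable {A B} in
lemma trace_star_sandwichFamily_mul_self (hA : IsStrictlyPositive A) (hB : IsStrictlyPositive B)
    {z : ℂ} (hz : z.re = 1) :
    (star (sandwichFamily A B C z) * sandwichFamily A B C z).trace =
      (A * (cpow C (-(z / 2)) * B * cpow C (-star (z / 2)))).trace := by
  have hone : ((2 * (z / 2).re : ℝ) : ℂ) = 1 := by
    rw [Complex.div_ofNat_re, hz, mul_div_cancel₀ _ two_ne_zero, Complex.ofReal_one]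
  have hA' : star (cpow A (z / 2)) * cpow A (z / 2) = A := by
    rw [star_cpow_mul_cpow, hone, cpow_one hA]
  have hB' : cpow B (z / 2) * star (cpow B (z / 2)) = B := by
    rw [star_cpow, ← cpow_add, add_comm, cpow_add, ← star_cpow, star_cpow_mul_cpow, hone,
      cpow_one hB]
  calc (star (sandwichFamily A B C z) * sandwichFamily A B C z).trace
      = (star (cpow B (z / 2)) * (cpow C (-star (z / 2)) *
          (star (cpow A (z / 2)) * cpow A (z / 2)) * cpow C (-(z / 2)) *
            cpow B (z / 2))).trace := by
        rw [← star_neg, ← star_cpow]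
        simp only [sandwichFamily, star_mul, mul_assoc]
    _ = (cpow C (-star (z / 2)) *
          (A * (cpow C (-(z / 2)) * (cpow B (z / 2) * star (cpow B (z / 2)))))).trace := by
        rw [Matrix.trace_mul_comm, hA']
        simp only [mul_assoc]
    _ = (A * (cpow C (-(z / 2)) * B * cpow C (-star (z / 2)))).trace := by
        rw [Matrix.trace_mul_comm, hB']
        simp only [mul_assoc]

lemma sandwich_eq_cpow_neg_one (s : ℝ) :
    cpow A (-s / 2 : ℝ) * cpow C (s / 2 : ℝ) * cpow B (-s : ℝ) * cpow C (s / 2 : ℝ) *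
        cpow A (-s / 2 : ℝ) =
      cpow (sandwichFamily A B C s * star (sandwichFamily A B C s)) (-1 : ℝ) := by
  set G := sandwichFamily A B C s
  set Z := cpow B (-s / 2 : ℝ) * cpow C (s / 2 : ℝ) * cpow A (-s / 2 : ℝ)
  have hG : IsStrictlyPositive (G * star G) := isStrictlyPositive_sandwichFamily_mul_star ..
  have hZ : star Z * Z = cpow A (-s / 2 : ℝ) * cpow C (s / 2 : ℝ) * cpow B (-s : ℝ) *
      cpow C (s / 2 : ℝ) * cpow A (-s / 2 : ℝ) := by
    have hB : star (cpow B (-s / 2 : ℝ)) * cpow B (-s / 2 : ℝ) = cpow B (-s : ℝ) := by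
      rw [star_cpow_mul_cpow, Complex.ofReal_re, mul_div_cancel₀ _ two_ne_zero]
    have hstar (M : Matrix n n ℂ) (t : ℝ) : star (cpow M t) = cpow M t := by
      rw [star_cpow, Complex.star_def, Complex.conj_ofReal]
    rw [← hB]
    simp only [Z, star_mul, hstar, mul_assoc]
  have hGZ : G * Z = 1 := by
    have cancel (M N : Matrix n n ℂ) {z w : ℂ} (h : z + w = 0) : cpow M z * (cpow M w * N) = N := by
      rw [← mul_assoc, cpow_mul_cpow_cancel M h, one_mul]
    simp only [G, Z, sandwichFamily, mul_assoc]
    rw [cancel, cancel, cpow_mul_cpow_cancel] <;> push_cast <;> ring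
  rw [← hZ]
  refine left_inv_eq_right_inv (a := G * star G) ?_ ?_
  · calc star Z * Z * (G * star G) = star Z * (Z * G) * star G := by simp only [mul_assoc]
      _ = star (G * Z) := by rw [mul_eq_one_comm.1 hGZ, mul_one, ← star_mul]
      _ = 1 := by rw [hGZ, star_one]
  · have hcancel := cpow_mul_cpow_cancel (G * star G) (z := 1) (w := (-1 : ℝ)) (by simp)
    rwa [cpow_one hG] at hcancel

variable {A B C}

theorem trace_mpow_sandwich_le (hA : A.PosDef) (hB : B.PosDef) (hC : C.PosDef) {s : ℝ}
    (hs : s ∈ Set.Ioc 0 1) {τ : ℂ}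
    (hτ : ∀ w : ℂ, w.re = 1 / 2 → (A * (cpow C (-w) * B * cpow C (-star w))).trace ≤ τ) :
    (mpow (mpow A (-s / 2) * mpow C (s / 2) * mpow B (-s) * mpow C (s / 2) * mpow A (-s / 2))
      (1 / -s)).trace ≤ τ := by
  let P := sandwichFamily A B C s * star (sandwichFamily A B C s)
  have hinv : (cpow P (-1 : ℝ)).PosDef :=
    Matrix.isStrictlyPositive_iff_posDef.1 (isStrictlyPositive_cpow_ofReal P (-1))
  have hexp : ((1 / -s : ℝ) : ℂ) * (-1 : ℝ) = (1 / s : ℝ) := by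
    rw [← Complex.ofReal_mul, div_neg, neg_mul_neg, mul_one]
  rw [mpow_eq_cpow hA, mpow_eq_cpow hB, mpow_eq_cpow hC, sandwich_eq_cpow_neg_one,
    mpow_eq_cpow hinv, cpow_cpow, hexp]
  refine (isSteinFamily_sandwichFamily A B C).trace_cpow_le hs (fun z hz => ?_) (fun z hz => ?_)
    (isStrictlyPositive_sandwichFamily_mul_star A B C s)
  · exact (Unitary.star_mul_self_of_mem (sandwichFamily_mem_unitary A B C hz)).le
  · rw [trace_star_sandwichFamily_mul_self C hA.isStrictlyPositive hB.isStrictlyPositive hz]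
    exact hτ (z / 2) (by rw [Complex.div_ofNat_re, hz])

end Sandwich

section Tripartite

open scoped Kronecker

variable {dA dB dC : ℕ}

/-- The matrix unit `I_A ⊗ |b⟩⟨b'| ⊗ I_C`. These express the conditional expectation `redAC` in
Kraus form. -/
def matrixUnitB (b b' : Fin dB) :
    Matrix (Fin dA × Fin dB × Fin dC) (Fin dA × Fin dB × Fin dC) ℂ :=
  1 ⊗ₖ (Matrix.single b b' 1 ⊗ₖ 1)

lemma matrixUnitB_mul_matrixUnitB (a b c d : Fin dB) :
    (matrixUnitB a b * matrixUnitB c d :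
      Matrix (Fin dA × Fin dB × Fin dC) (Fin dA × Fin dB × Fin dC) ℂ) =
        if b = c then matrixUnitB a d else 0 := by
  simp only [matrixUnitB, ← Matrix.mul_kronecker_mul, mul_one]
  split_ifs with h
  · rw [h, Matrix.single_mul_single_same, mul_one]
  · rw [Matrix.single_mul_single_of_ne _ _ _ _ h, Matrix.zero_kronecker, Matrix.kronecker_zero]

variable (M N : Matrix (Fin dA × Fin dB × Fin dC) (Fin dA × Fin dB × Fin dC) ℂ)

lemma matrixUnitB_mul (b b' : Fin dB) :
    matrixUnitB b b' * M = .of fun x y => if x.2.1 = b then M (x.1, b', x.2.2) y else 0 := by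
  ext ⟨xa, xb, xc⟩ y
  simp [matrixUnitB, Matrix.mul_apply, Fintype.sum_prod_type, Matrix.one_apply,
    Matrix.single_apply, ite_and, eq_comm]

lemma mul_matrixUnitB (b b' : Fin dB) :
    M * matrixUnitB b' b = .of fun x y => if y.2.1 = b then M x (y.1, b', y.2.2) else 0 := by
  ext x ⟨ya, yb, yc⟩
  simp [matrixUnitB, Matrix.mul_apply, Fintype.sum_prod_type, Matrix.one_apply,
    Matrix.single_apply, ite_and, eq_comm]

lemma redAC_eq_sum_matrixUnitB :
    redAC M = ∑ b, ∑ b', matrixUnitB b b' * M * matrixUnitB b' b := by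
  ext x y
  simp [Matrix.sum_apply, mul_matrixUnitB, matrixUnitB_mul, redAC, eq_comm]

lemma trace_redAC_mul : (redAC M * N).trace = (M * redAC N).trace := by
  simp only [redAC_eq_sum_matrixUnitB, Finset.sum_mul, Finset.mul_sum, Matrix.trace_sum]
  rw [Finset.sum_comm]
  refine Finset.sum_congr rfl fun b _ => Finset.sum_congr rfl fun b' _ => ?_
  rw [mul_assoc, mul_assoc, Matrix.trace_mul_comm]
  simp only [mul_assoc]

lemma redAC_commute_matrixUnitB (c d : Fin dB) : Commute (redAC M) (matrixUnitB c d) := by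
  have hright : redAC M * matrixUnitB c d = ∑ b', matrixUnitB c b' * M * matrixUnitB b' d := by
    rw [redAC_eq_sum_matrixUnitB, Finset.sum_comm, Finset.sum_mul]
    simp [Finset.sum_mul, mul_assoc, matrixUnitB_mul_matrixUnitB]
  have hleft : matrixUnitB c d * redAC M = ∑ b', matrixUnitB c b' * M * matrixUnitB b' d := by
    rw [redAC_eq_sum_matrixUnitB, Finset.mul_sum]
    simp [Finset.mul_sum, ← mul_assoc, matrixUnitB_mul_matrixUnitB]
  exact hright.trans hleft.symm

variable {M} in
lemma redAC_mul_mul {K L : Matrix (Fin dA × Fin dB × Fin dC) (Fin dA × Fin dB × Fin dC) ℂ}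
    (hK : ∀ b b', Commute K (matrixUnitB b b')) (hL : ∀ b b', Commute L (matrixUnitB b b')) :
    redAC (K * M * L) = K * redAC M * L := by
  simp only [redAC_eq_sum_matrixUnitB, Finset.sum_mul, Finset.mul_sum]
  refine Finset.sum_congr rfl fun b _ => Finset.sum_congr rfl fun b' _ => ?_
  calc matrixUnitB b b' * (K * M * L) * matrixUnitB b' b
      = (matrixUnitB b b' * K) * M * (L * matrixUnitB b' b) := by simp only [mul_assoc]
    _ = K * (matrixUnitB b b' * M * matrixUnitB b' b) * L := by
        rw [← (hK b b').eq, (hL b' b).eq]; simp only [mul_assoc]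

lemma redC_eq_redAC_redBC : redC M = redAC (redBC M) := by
  ext x y
  let f : Fin dA → Fin dB → ℂ := fun m l => M (m, l, x.2.2) (m, l, y.2.2)
  change (if x.1 = y.1 then (1 : ℂ) else 0) * (if x.2.1 = y.2.1 then (1 : ℂ) else 0) *
      ∑ m, ∑ l, f m l =
    (if x.2.1 = y.2.1 then (1 : ℂ) else 0) *
      ∑ l, (if x.1 = y.1 then (1 : ℂ) else 0) * ∑ m, f m l
  rw [← Finset.mul_sum, Finset.sum_comm]
  ring

lemma redBC_eq_one_kronecker :
    redBC M = (1 : Matrix (Fin dA) (Fin dA) ℂ) ⊗ₖ ∑ m, M.submatrix (Prod.mk m) (Prod.mk m) := by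
  ext x y
  simp only [redBC, Matrix.kroneckerMap_apply, Matrix.one_apply, Matrix.sum_apply,
    Matrix.submatrix_apply]

lemma redAC_eq_submatrix_redBC :
    redAC M = (redBC (M.submatrix (fun x : Fin dB × Fin dA × Fin dC => (x.2.1, x.1, x.2.2))
      fun x => (x.2.1, x.1, x.2.2))).submatrix (fun x => (x.2.1, x.1, x.2.2))
        fun x => (x.2.1, x.1, x.2.2) :=
  rfl

variable {M}

lemma posDef_redBC (hM : M.PosDef) : (redBC M).PosDef := by
  cases isEmpty_or_nonempty (Fin dA)
  · rw [Subsingleton.elim (redBC M) 1]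
    exact .one
  · rw [redBC_eq_one_kronecker]
    exact Matrix.PosDef.one.kronecker (Matrix.posDef_sum Finset.univ_nonempty fun m _ =>
      hM.submatrix (Prod.mk_right_injective m))

lemma posDef_redAC (hM : M.PosDef) : (redAC M).PosDef := by
  have hswap {α β γ : Type} : Function.Injective fun x : α × β × γ => (x.2.1, x.1, x.2.2) := by
    rintro ⟨a, b, c⟩ ⟨a', b', c'⟩ h
    simp_all
  rw [redAC_eq_submatrix_redBC]
  exact (posDef_redBC (hM.submatrix hswap)).submatrix hswap

lemma posDef_redC (hM : M.PosDef) : (redC M).PosDef := by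
  rw [redC_eq_redAC_redBC]
  exact posDef_redAC (posDef_redBC hM)

end Tripartite

section Main

open scoped MatrixOrder Matrix.Norms.L2Operator

variable {dA dB dC : ℕ} {ρ : Matrix (Fin dA × Fin dB × Fin dC) (Fin dA × Fin dB × Fin dC) ℂ}

/-- By duality for the trace, `redAC` acts on the second factor, where its bimodule property turns
`ρ_BC` into `ρ_C`. -/
lemma trace_redAC_mul_redC_conj_redBC (hρ : ρ.PosDef) {w : ℂ} (hw : w.re = 1 / 2) :
    (redAC ρ * (cpow (redC ρ) (-w) * redBC ρ * cpow (redC ρ) (-star w))).trace = ρ.trace := by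
  have hcomm (z : ℂ) (b b' : Fin dB) : Commute (cpow (redC ρ) z) (matrixUnitB b b') :=
    cpow_commute (redC_eq_redAC_redBC ρ ▸ redAC_commute_matrixUnitB _ b b') z
  have hsum : -w + 1 + -star w = 0 := by
    rw [← starRingEnd_apply, add_right_comm, ← neg_add, Complex.add_conj, hw]
    norm_num
  calc (redAC ρ * (cpow (redC ρ) (-w) * redBC ρ * cpow (redC ρ) (-star w))).trace
      = (ρ * (cpow (redC ρ) (-w) * redC ρ * cpow (redC ρ) (-star w))).trace := by
        rw [trace_redAC_mul, redAC_mul_mul (hcomm _) (hcomm _), ← redC_eq_redAC_redBC]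
    _ = (ρ * cpow (redC ρ) (-w + 1 + -star w)).trace := by
        rw [cpow_add, cpow_add, cpow_one (posDef_redC hρ).isStrictlyPositive]
    _ = ρ.trace := by rw [hsum, cpow_zero, mul_one]

end Main

theorem stmt_7_general {dA dB dC : ℕ}
    (ρ : Matrix (Fin dA × Fin dB × Fin dC) (Fin dA × Fin dB × Fin dC) ℂ)
    (hρ : ρ.PosDef) (α : ℝ) (hα : α ∈ Set.Ioc (1 : ℝ) 2) :
    (mpow (mpow (redAC ρ) ((1 - α) / 2) * mpow (redC ρ) ((α - 1) / 2) * mpow (redBC ρ) (1 - α) *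
      mpow (redC ρ) ((α - 1) / 2) * mpow (redAC ρ) ((1 - α) / 2)) (1 / (1 - α))).trace ≤
        ρ.trace := by
  obtain ⟨s, rfl⟩ : ∃ s, α = 1 + s := ⟨α - 1, by ring⟩
  have hs : s ∈ Set.Ioc 0 1 := by constructor <;> linarith [hα.1, hα.2]
  rw [sub_add_cancel_left, add_sub_cancel_left]
  exact trace_mpow_sandwich_le (posDef_redAC hρ) (posDef_redBC hρ) (posDef_redC hρ) hs
    fun w hw => (trace_redAC_mul_redC_conj_redBC hρ hw).le

theorem stmt_7 {dA dB dC : ℕ}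
    (ρ : Matrix (Fin dA × Fin dB × Fin dC) (Fin dA × Fin dB × Fin dC) ℂ)
    (hρ : ρ.PosDef) (hρ1 : ρ.trace = 1)
    (α : ℝ) (hα : α ∈ Set.Ioo (1:ℝ) 2) :
    (mpow (mpow (redAC ρ) ((1 - α)/2) * mpow (redC ρ) ((α - 1)/2) *
        mpow (redBC ρ) (1 - α) * mpow (redC ρ) ((α - 1)/2) * mpow (redAC ρ) ((1 - α)/2)) (1/(1 - α))).trace ≤ 1 :=
  (stmt_7_general ρ hρ α (Set.Ioo_subset_Ioc_self hα)).trans_eq hρ1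
end

section
/- Let ρ_ABC be a positive definite density matrix (positive definite with trace 1) on the tensor product of finite-dimensional complex Hilbert spaces H_A ⊗ H_B ⊗ H_C. Then for every α ∈ (1,∞), Tr{ ( ρ_AC^{(1−α)/(2α)} ρ_C^{(α−1)/(2α)} ρ_BC^{(1−α)/α} ρ_C^{(α−1)/(2α)} ρ_AC^{(1−α)/(2α)} )^{α/(1−α)} } ≤ 1. -/
open scoped ComplexOrder Matrix

/-!
Put `a = ρ_AC`, `b = ρ_BC`, `c = ρ_C` and `s = (α - 1) / α ∈ (0, 1)`. The analytic family
`G z = b ^ (z / 2) * c ^ (-z / 2) * a ^ (z / 2)` is a contraction on `Re z = 0`, while the matrix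
to be bounded is `h = (star (G s) * G s) ^ s⁻¹`. If `star u` is the unitary part of `G s`, then
`tr h = tr (h ^ (1 - s / 2) * u * G s)`, and the three lines theorem for
`z ↦ tr (h ^ (1 - z / 2) * u * G z)` gives `tr h ≤ (tr h) ^ (1 - s) * (√(tr h) * √τ) ^ s`, that is
`tr h ≤ τ`, as soon as `tr (star (G z) * G z) ≤ τ` on `Re z = 1`. There the trace is
`tr (ρ_AC * ρ_C ^ (-star w) * ρ_BC * ρ_C ^ (-w))` with `w = z / 2`; tracing out `A` and `B` turns
it into `tr (ρ_C ^ (1 - star w + 1 - w)) = tr ρ_C = tr ρ`. The interpolation takes place in any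
C⋆-algebra with a positive tracial functional.
-/

section ComplexPower

open NormedSpace

variable {A : Type*} [CStarAlgebra A]

/-- The complex power `a ^ z = exp (z log a)` of a strictly positive element `a` of a C⋆-algebra.
It extends the real power `CFC.rpow` to an entire function of the exponent. -/
noncomputable def complexPower (a : A) (z : ℂ) : A := exp (z • CFC.log a)

theorem complexPower_add (a : A) (z w : ℂ) :
    complexPower a (z + w) = complexPower a z * complexPower a w := by
  let _ : NormedAlgebra ℚ A := .restrictScalars ℚ ℂ A
  rw [complexPower, add_smul]
  exact exp_add_of_commute (((Commute.refl _).smul_left z).smul_right w)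

theorem star_complexPower (a : A) (z : ℂ) :
    star (complexPower a z) = complexPower a (star z) := by
  rw [complexPower, complexPower, star_exp, star_smul, IsSelfAdjoint.log.star_eq]

theorem differentiable_complexPower (a : A) : Differentiable ℂ (complexPower a) := fun z =>
  (hasDerivAt_exp_smul_const (𝕂 := ℂ) (CFC.log a) z).differentiableAt

theorem norm_exp_le_of_isSelfAdjoint {a : A} (ha : IsSelfAdjoint a) :
    ‖exp a‖ ≤ Real.exp ‖a‖ := by
  nontriviality A
  rw [← CFC.real_exp_eq_normedSpace_exp]
  refine norm_cfc_le (Real.exp_pos _).le fun x hx => ?_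
  rw [Real.norm_of_nonneg (Real.exp_pos x).le, Real.exp_le_exp]
  exact (Real.le_norm_self x).trans (spectrum.norm_le_norm_of_mem hx)

theorem norm_complexPower_le (a : A) (z : ℂ) :
    ‖complexPower a z‖ ≤ Real.exp (|z.re| * ‖CFC.log a‖) := by
  have hre : star z + z = ((2 * z.re : ℝ) : ℂ) := by
    rw [add_comm]; exact Complex.add_conj z
  -- By the C⋆-identity it suffices to bound the exponential of the self-adjoint `2 Re z log a`.
  have hsq : star (complexPower a z) * complexPower a z = exp ((2 * z.re) • CFC.log a) := by
    rw [star_complexPower, ← complexPower_add, hre, complexPower, Complex.coe_smul]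
  rw [mul_self_le_mul_self_iff (norm_nonneg _) (Real.exp_pos _).le, ← CStarRing.norm_star_mul_self,
    hsq, ← Real.exp_add]
  refine (norm_exp_le_of_isSelfAdjoint ((IsSelfAdjoint.all _).smul .log)).trans_eq ?_
  rw [norm_smul, Real.norm_eq_abs, abs_mul, abs_two]
  ring_nf

theorem norm_complexPower_le_of_abs_re_le (a : A) {z : ℂ} {r : ℝ} (hz : |z.re| ≤ r) :
    ‖complexPower a z‖ ≤ Real.exp (r * ‖CFC.log a‖) :=
  (norm_complexPower_le a z).trans (by gcongr)

theorem norm_complexPower_le_one (a : A) {z : ℂ} (hz : z.re = 0) : ‖complexPower a z‖ ≤ 1 := by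
  simpa [hz] using norm_complexPower_le a z

variable [PartialOrder A] [StarOrderedRing A]

theorem complexPower_ofReal {a : A} (ha : IsStrictlyPositive a) (t : ℝ) :
    complexPower a t = a ^ t := by
  have hpos : ∀ x ∈ spectrum ℝ a, 0 < x := fun x hx => ha.spectrum_pos hx
  have hlog : ContinuousOn Real.log (spectrum ℝ a) :=
    Real.continuousOn_log.mono fun x hx => (hpos x hx).ne'
  rw [complexPower, Complex.coe_smul, ← CFC.real_exp_eq_normedSpace_exp, CFC.log,
    ← cfc_smul t _ a hlog, ← cfc_comp' Real.exp _ a, CFC.rpow_eq_cfc_real]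
  refine cfc_congr fun x hx => ?_
  simp only [smul_eq_mul, Real.rpow_def_of_pos (hpos x hx), mul_comm t]

theorem complexPower_one {a : A} (ha : IsStrictlyPositive a) : complexPower a 1 = a :=
  (congrArg exp (one_smul ℂ _)).trans (CFC.exp_log a)

theorem star_complexPower_mul_self {a : A} (ha : IsStrictlyPositive a) (z : ℂ) :
    star (complexPower a z) * complexPower a z = a ^ (2 * z.re) := by
  rw [star_complexPower, ← complexPower_add, add_comm, ← complexPower_ofReal ha]
  exact congrArg _ (Complex.add_conj z)

theorem star_complexPower_mul_self_of_re_eq {a : A} (ha : IsStrictlyPositive a) {z : ℂ}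
    (hz : z.re = 1 / 2) : star (complexPower a z) * complexPower a z = a := by
  rw [star_complexPower_mul_self ha, hz, mul_one_div_cancel two_ne_zero, CFC.rpow_one a]

end ComplexPower

section Interpolation

open Complex Complex.HadamardThreeLines Set

variable {A : Type*} [CStarAlgebra A]

/-- This is the polar decomposition `g = star u * p`. -/
theorem exists_norm_le_one_mul_eq {g p : A} (hp : IsSelfAdjoint p) (hpu : IsUnit p)
    (hg : star g * g = p * p) : ∃ u : A, ‖u‖ ≤ 1 ∧ u * g = p := by
  set u : A := Ring.inverse p * star g with hu
  have hinv : Ring.inverse p * p = 1 := Ring.inverse_mul_cancel p hpu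
  have huu : u * star u = 1 := by
    rw [hu, star_mul, star_star, hp.ringInverse.star_eq, mul_assoc, ← mul_assoc (star g), hg,
      mul_assoc p, Ring.mul_inverse_cancel p hpu, mul_one, hinv]
  refine ⟨u, ?_, by rw [hu, mul_assoc, hg, ← mul_assoc, hinv, one_mul]⟩
  nontriviality A
  rw [← sq_le_one_iff₀ (norm_nonneg u), sq, ← CStarRing.norm_self_mul_star, huu, norm_one]

/-- The analytic family `b ^ (z / 2) * c ^ (-z / 2) * a ^ (z / 2)`, to be interpolated between
`Re z = 0`, where it is a contraction, and `Re z = 1`. -/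
noncomputable def interpolant (a b c : A) (z : ℂ) : A :=
  complexPower b (z / 2) * complexPower c (-(z / 2)) * complexPower a (z / 2)

theorem differentiable_interpolant (a b c : A) : Differentiable ℂ (interpolant a b c) := by
  have hb : Differentiable ℂ fun z : ℂ => complexPower b (z / 2) :=
    (differentiable_complexPower b).comp (by fun_prop)
  have hc : Differentiable ℂ fun z : ℂ => complexPower c (-(z / 2)) :=
    (differentiable_complexPower c).comp (by fun_prop)
  have ha : Differentiable ℂ fun z : ℂ => complexPower a (z / 2) :=
    (differentiable_complexPower a).comp (by fun_prop)
  exact (hb.mul hc).mul ha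

theorem bddAbove_norm_interpolant (a b c : A) :
    BddAbove ((norm ∘ interpolant a b c) '' verticalClosedStrip 0 1) := by
  refine ⟨Real.exp (1 * ‖CFC.log b‖) * Real.exp (1 * ‖CFC.log c‖) * Real.exp (1 * ‖CFC.log a‖), ?_⟩
  rintro _ ⟨z, hz, rfl⟩
  obtain ⟨h0, h1⟩ : 0 ≤ z.re ∧ z.re ≤ 1 := hz
  have hre : |(z / 2).re| ≤ 1 := by
    rw [div_ofNat_re]; exact abs_le.mpr ⟨by linarith, by linarith⟩
  have hre' : |(-(z / 2)).re| ≤ 1 := by rwa [neg_re, abs_neg]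
  exact norm_mul_le_of_le (norm_mul_le_of_le (norm_complexPower_le_of_abs_re_le b hre)
    (norm_complexPower_le_of_abs_re_le c hre')) (norm_complexPower_le_of_abs_re_le a hre)

theorem norm_interpolant_le_one (a b c : A) {z : ℂ} (hz : z.re = 0) :
    ‖interpolant a b c z‖ ≤ 1 := by
  have hre : (z / 2).re = 0 := by rw [div_ofNat_re, hz, zero_div]
  have hre' : (-(z / 2)).re = 0 := by rw [neg_re, hre, neg_zero]
  simpa only [interpolant, one_mul] using norm_mul_le_of_le
    (norm_mul_le_of_le (norm_complexPower_le_one b hre) (norm_complexPower_le_one c hre'))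
    (norm_complexPower_le_one a hre)

variable [PartialOrder A]

theorem re_apply_nonneg (φ : A →ₚ[ℂ] ℂ) {a : A} (ha : 0 ≤ a) : 0 ≤ (φ a).re :=
  (Complex.nonneg_iff.mp (φ.map_nonneg ha)).1

variable [StarOrderedRing A] {φ : A →ₚ[ℂ] ℂ}

/-- This is Cauchy–Schwarz in the GNS space of `φ`, on which `b` acts by left multiplication. -/
theorem norm_apply_star_mul_mul_le (φ : A →ₚ[ℂ] ℂ) (a b c : A) :
    ‖φ (star a * (b * c))‖ ≤ √(φ (star a * a)).re * (‖b‖ * √(φ (star c * c)).re) :=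
  calc ‖φ (star a * (b * c))‖
      ≤ ‖φ.toPreGNS a‖ * ‖φ.leftMulMapPreGNS b (φ.toPreGNS c)‖ :=
        norm_inner_le_norm (𝕜 := ℂ) (φ.toPreGNS a) (φ.leftMulMapPreGNS b (φ.toPreGNS c))
    _ ≤ ‖φ.toPreGNS a‖ * (‖b‖ * ‖φ.toPreGNS c‖) := by
        gcongr
        refine (ContinuousLinearMap.le_opNorm _ _).trans ?_
        gcongr
        exact LinearMap.mkContinuous_norm_le _ (norm_nonneg b) _

theorem norm_apply_le (φ : A →ₚ[ℂ] ℂ) (a : A) : ‖φ a‖ ≤ (φ 1).re * ‖a‖ := by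
  have h := norm_apply_star_mul_mul_le φ 1 a 1
  rwa [star_one, one_mul, one_mul, mul_one, mul_left_comm,
    Real.mul_self_sqrt (re_apply_nonneg φ zero_le_one), mul_comm] at h

theorem le_of_le_rpow_mul_sqrt_rpow {T τ s : ℝ} (hT : 0 ≤ T) (hτ : 0 ≤ τ) (hs : 0 < s)
    (h : T ≤ T ^ (1 - s) * (√T * √τ) ^ s) : T ≤ τ := by
  rcases hT.eq_or_lt with rfl | hT
  · exact hτ
  have hpow : T ^ (1 - s) * T ^ s ≤ T ^ (1 - s) * (√T * √τ) ^ s := by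
    rwa [← Real.rpow_add hT, sub_add_cancel, Real.rpow_one]
  have hsqrt : √T * √T ≤ √T * √τ := by
    rw [Real.mul_self_sqrt hT.le]
    exact (Real.rpow_le_rpow_iff hT.le (by positivity) hs).mp
      (le_of_mul_le_mul_left hpow (Real.rpow_pos_of_pos hT _))
  exact (Real.sqrt_le_sqrt_iff hτ).mp (le_of_mul_le_mul_left hsqrt (Real.sqrt_pos.mpr hT))

/-- The scalar function to which the three lines theorem is applied: the pairing of `u * G z` with
the analytic family `h ^ (1 - z / 2)`, whose exponent makes the pairing at `z = s` equal to `φ h`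
when `u * G s = h ^ (s / 2)`. -/
noncomputable def dualPairing (φ : A →ₚ[ℂ] ℂ) (h u : A) (G : ℂ → A) (z : ℂ) : ℂ :=
  φ (complexPower h (1 - z / 2) * (u * G z))

variable {h u : A} {G : ℂ → A} {z : ℂ}

theorem norm_dualPairing_le_of_re_eq_zero (hφ : ∀ x y, φ (x * y) = φ (y * x))
    (hh : IsStrictlyPositive h) (hu : ‖u‖ ≤ 1) (hz : z.re = 0) (hG : ‖G z‖ ≤ 1) :
    ‖dualPairing φ h u G z‖ ≤ (φ h).re := by
  have hsplit : dualPairing φ h u G z = φ (star (complexPower h (1 / 2)) *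
      ((u * G z) * complexPower h (1 / 2 - z / 2))) := by
    have hexp : 1 - z / 2 = (1 / 2 - z / 2) + star (1 / 2 : ℂ) := by
      rw [star_div₀, star_one, star_ofNat]; ring
    rw [dualPairing, hexp, complexPower_add, mul_assoc, hφ, star_complexPower]
    simp only [mul_assoc]
  have hnorm : ‖u * G z‖ ≤ 1 := (norm_mul_le _ _).trans (mul_le_one₀ hu (norm_nonneg _) hG)
  have hleft : star (complexPower h (1 / 2)) * complexPower h (1 / 2) = h :=
    star_complexPower_mul_self_of_re_eq hh (by simp)
  have hright : star (complexPower h (1 / 2 - z / 2)) * complexPower h (1 / 2 - z / 2) = h :=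
    star_complexPower_mul_self_of_re_eq hh (by simp [hz])
  calc ‖dualPairing φ h u G z‖
      ≤ √(φ h).re * (‖u * G z‖ * √(φ h).re) := by
        simpa only [hsplit, hleft, hright] using norm_apply_star_mul_mul_le φ
          (complexPower h (1 / 2)) (u * G z) (complexPower h (1 / 2 - z / 2))
    _ ≤ √(φ h).re * √(φ h).re := by
        gcongr
        exact mul_le_of_le_one_left (Real.sqrt_nonneg _) hnorm
    _ = (φ h).re := Real.mul_self_sqrt (re_apply_nonneg φ hh.nonneg)

theorem norm_dualPairing_le_of_re_eq_one (hh : IsStrictlyPositive h) (hu : ‖u‖ ≤ 1)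
    (hz : z.re = 1) :
    ‖dualPairing φ h u G z‖ ≤ √(φ h).re * √(φ (star (G z) * G z)).re := by
  have hself : star (complexPower h (star (1 - z / 2))) * complexPower h (star (1 - z / 2)) = h :=
    star_complexPower_mul_self_of_re_eq hh <| by
      rw [star_def, conj_re, sub_re, one_re, div_ofNat_re, hz, sub_half]
  calc ‖dualPairing φ h u G z‖
      ≤ √(φ h).re * (‖u‖ * √(φ (star (G z) * G z)).re) := by
        have hCS := norm_apply_star_mul_mul_le φ (complexPower h (star (1 - z / 2))) u (G z)
        rwa [hself, star_complexPower, star_star] at hCS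
    _ ≤ √(φ h).re * √(φ (star (G z) * G z)).re := by
        gcongr
        exact mul_le_of_le_one_left (Real.sqrt_nonneg _) hu

theorem diffContOnCl_dualPairing {S : Set ℂ} (hG : DiffContOnCl ℂ G S) :
    DiffContOnCl ℂ (dualPairing φ h u G) S := by
  have hpow : Differentiable ℂ fun z : ℂ => complexPower h (1 - z / 2) :=
    (differentiable_complexPower h).comp (by fun_prop)
  have hprod : DiffContOnCl ℂ (fun z => complexPower h (1 - z / 2) * (u * G z)) S :=
    ⟨hpow.differentiableOn.mul (hG.1.const_mul u),
      hpow.continuous.continuousOn.mul (continuousOn_const.mul hG.2)⟩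
  let φL : A →L[ℂ] ℂ := ⟨φ.toLinearMap, map_continuous φ⟩
  exact φL.differentiable.comp_diffContOnCl hprod

theorem bddAbove_norm_dualPairing
    (hB : BddAbove ((norm ∘ G) '' verticalClosedStrip 0 1)) :
    BddAbove ((norm ∘ dualPairing φ h u G) '' verticalClosedStrip 0 1) := by
  obtain ⟨M, hM⟩ := hB
  refine ⟨(φ 1).re * (Real.exp (1 * ‖CFC.log h‖) * (‖u‖ * M)), ?_⟩
  rintro _ ⟨z, hz, rfl⟩
  have hre : |(1 - z / 2).re| ≤ 1 := by
    obtain ⟨h0, h1⟩ : 0 ≤ z.re ∧ z.re ≤ 1 := hz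
    simp only [sub_re, one_re, div_ofNat_re]
    exact abs_le.mpr ⟨by linarith, by linarith⟩
  have hφ := re_apply_nonneg φ (zero_le_one' A)
  calc ‖dualPairing φ h u G z‖
      ≤ (φ 1).re * (‖complexPower h (1 - z / 2)‖ * (‖u‖ * ‖G z‖)) :=
        (norm_apply_le φ _).trans <| mul_le_mul_of_nonneg_left
          (norm_mul_le_of_le le_rfl (norm_mul_le _ _)) hφ
    _ ≤ (φ 1).re * (Real.exp (1 * ‖CFC.log h‖) * (‖u‖ * M)) := by
        gcongr
        · exact norm_complexPower_le_of_abs_re_le h hre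
        · exact hM ⟨z, hz, rfl⟩

theorem dualPairing_of_mul_eq {s : ℝ} (hh : IsStrictlyPositive h) (hu : u * G s = h ^ (s / 2)) :
    dualPairing φ h u G s = φ h := by
  have hpow : h ^ (s / 2) = complexPower h (s / 2) := by
    rw [← complexPower_ofReal hh]; push_cast; rfl
  rw [dualPairing, hu, hpow, ← complexPower_add, sub_add_cancel, complexPower_one hh]

theorem stein_interpolation (hφ : ∀ x y, φ (x * y) = φ (y * x)) {τ : ℝ}
    (hG : DiffContOnCl ℂ G (verticalStrip 0 1))
    (hB : BddAbove ((norm ∘ G) '' verticalClosedStrip 0 1))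
    (h₀ : ∀ z, z.re = 0 → ‖G z‖ ≤ 1)
    (h₁ : ∀ z, z.re = 1 → (φ (star (G z) * G z)).re ≤ τ)
    (hh : IsStrictlyPositive h) {s : ℝ} (hs : s ∈ Ioo 0 1)
    (hGs : star (G s) * G s = h ^ s) : (φ h).re ≤ τ := by
  have hpos : IsStrictlyPositive (h ^ (s / 2)) := hh.rpow h _
  obtain ⟨u, hu, huG⟩ := exists_norm_le_one_mul_eq hpos.isSelfAdjoint hpos.isUnit
    (hGs.trans (by rw [← CFC.rpow_add hh.isUnit, add_halves]))
  have hT : 0 ≤ (φ h).re := re_apply_nonneg φ hh.nonneg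
  have hτ : 0 ≤ τ := (re_apply_nonneg φ (star_mul_self_nonneg (G 1))).trans (h₁ 1 one_re)
  -- With `T = φ h` this reads `T ≤ T ^ (1 - s) * (√T * √τ) ^ s`.
  have hstrip := norm_le_interp_of_mem_verticalClosedStrip₀₁' (dualPairing φ h u G)
    (z := s) ⟨hs.1.le, hs.2.le⟩ (diffContOnCl_dualPairing hG) (bddAbove_norm_dualPairing hB)
    (fun z hz => norm_dualPairing_le_of_re_eq_zero hφ hh hu hz (h₀ z hz))
    (fun z hz => (norm_dualPairing_le_of_re_eq_one hh hu hz).trans (by grw [h₁ z hz]))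
  rw [dualPairing_of_mul_eq hh huG, ofReal_re] at hstrip
  exact le_of_le_rpow_mul_sqrt_rpow hT hτ hs.1 ((re_le_norm _).trans hstrip)

theorem apply_star_interpolant_mul_self (hφ : ∀ x y, φ (x * y) = φ (y * x)) {a b : A} (c : A)
    (ha : IsStrictlyPositive a) (hb : IsStrictlyPositive b) {z : ℂ} (hz : z.re = 1) :
    φ (star (interpolant a b c z) * interpolant a b c z) =
      φ (a * complexPower c (-star (z / 2)) * b * complexPower c (-(z / 2))) := by
  have hre : (z / 2).re = 1 / 2 := by rw [div_ofNat_re, hz]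
  set w := z / 2
  have hb' : star (complexPower b w) * complexPower b w = b :=
    star_complexPower_mul_self_of_re_eq hb hre
  have ha' : complexPower a w * star (complexPower a w) = a := by
    have h := star_complexPower_mul_self_of_re_eq ha (z := star w) (by simpa using hre)
    rwa [star_complexPower, star_star, ← star_complexPower] at h
  calc φ (star (interpolant a b c z) * interpolant a b c z)
      = φ (star (complexPower a w) * (complexPower c (-star w) *
          (star (complexPower b w) * complexPower b w) * complexPower c (-w) *
            complexPower a w)) := by
        simp only [interpolant, star_mul, star_complexPower c, star_neg, mul_assoc, w]
    _ = φ (complexPower c (-star w) * b * complexPower c (-w) *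
          (complexPower a w * star (complexPower a w))) := by
        rw [hb', hφ, mul_assoc]
    _ = φ (a * complexPower c (-star w) * b * complexPower c (-w)) := by
        rw [ha', hφ]; simp only [mul_assoc]

theorem star_interpolant_ofReal_mul_self {a b c : A} (ha : IsStrictlyPositive a)
    (hb : IsStrictlyPositive b) (hc : IsStrictlyPositive c) (s : ℝ) :
    star (interpolant a b c s) * interpolant a b c s =
      a ^ (s / 2) * c ^ (-(s / 2)) * b ^ s * c ^ (-(s / 2)) * a ^ (s / 2) := by
  have hexp : (s : ℂ) / 2 = (s / 2 : ℝ) := by push_cast; rfl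
  have hpow {x : A} (hx : IsStrictlyPositive x) (r : ℝ) : star (x ^ r) = x ^ r :=
    (hx.rpow x r).isSelfAdjoint.star_eq
  have hbb : b ^ s = b ^ (s / 2) * b ^ (s / 2) := by rw [← CFC.rpow_add hb.isUnit, add_halves]
  rw [interpolant, hexp, ← ofReal_neg, complexPower_ofReal ha, complexPower_ofReal hb,
    complexPower_ofReal hc, star_mul, star_mul, hpow ha, hpow hb, hpow hc, hbb]
  simp only [mul_assoc]

theorem eq_rpow_neg_one_of_mul_eq_one {x y : A} (hx : IsStrictlyPositive x) (h : y * x = 1) :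
    y = x ^ (-1 : ℝ) := by
  refine left_inv_eq_right_inv h ?_
  simpa only [CFC.rpow_one x] using CFC.rpow_mul_rpow_neg 1 hx

theorem isStrictlyPositive_rpow_sandwich {a b c : A} (ha : IsStrictlyPositive a)
    (hb : IsStrictlyPositive b) (hc : IsStrictlyPositive c) (r s t : ℝ) :
    IsStrictlyPositive (a ^ r * c ^ s * b ^ t * c ^ s * a ^ r) := by
  have hconj {x y : A} (hx : IsStrictlyPositive x) (hy : IsStrictlyPositive y) :
      IsStrictlyPositive (x * y * x) :=
    .conjugate_of_isUnit_of_isSelfAdjoint _ _ hx.isUnit hx.isSelfAdjoint hy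
  simpa only [mul_assoc] using hconj (ha.rpow a r) (hconj (hc.rpow c s) (hb.rpow b t))

theorem rpow_sandwich_mul_rpow_neg_sandwich {a b c : A} (ha : IsStrictlyPositive a)
    (hb : IsStrictlyPositive b) (hc : IsStrictlyPositive c) (r s t : ℝ) :
    a ^ r * c ^ s * b ^ t * c ^ s * a ^ r * (a ^ (-r) * c ^ (-s) * b ^ (-t) * c ^ (-s) * a ^ (-r)) =
      1 := by
  have hcancel {x y y' : A} (hx : IsStrictlyPositive x) (u : ℝ) (hy : y * y' = 1) :
      x ^ u * y * x ^ u * (x ^ (-u) * y' * x ^ (-u)) = 1 := by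
    calc x ^ u * y * x ^ u * (x ^ (-u) * y' * x ^ (-u))
        = x ^ u * (y * (x ^ u * x ^ (-u)) * y') * x ^ (-u) := by simp only [mul_assoc]
      _ = 1 := by
        rw [CFC.rpow_mul_rpow_neg u, mul_one, hy, mul_one, CFC.rpow_mul_rpow_neg u]
  simpa only [mul_assoc] using hcancel ha r (hcancel hc s (CFC.rpow_mul_rpow_neg t hb))

theorem re_apply_rpow_sandwich_le (hφ : ∀ x y, φ (x * y) = φ (y * x)) {a b c : A}
    (ha : IsStrictlyPositive a) (hb : IsStrictlyPositive b) (hc : IsStrictlyPositive c)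
    {τ s : ℝ} (hs : s ∈ Ioo 0 1)
    (hτ : ∀ w : ℂ, w.re = 1 / 2 →
      (φ (a * complexPower c (-star w) * b * complexPower c (-w))).re ≤ τ) :
    (φ ((a ^ (-(s / 2)) * c ^ (s / 2) * b ^ (-s) * c ^ (s / 2) * a ^ (-(s / 2))) ^ (-s⁻¹))).re ≤
      τ := by
  set X : A := a ^ (-(s / 2)) * c ^ (s / 2) * b ^ (-s) * c ^ (s / 2) * a ^ (-(s / 2))
  have hX : IsStrictlyPositive X := isStrictlyPositive_rpow_sandwich ha hb hc _ _ _
  have hXinv : star (interpolant a b c s) * interpolant a b c s = X ^ (-1 : ℝ) := by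
    refine eq_rpow_neg_one_of_mul_eq_one hX ?_
    rw [star_interpolant_ofReal_mul_self ha hb hc]
    simpa only [neg_neg] using
      rpow_sandwich_mul_rpow_neg_sandwich ha hb hc (s / 2) (-(s / 2)) s
  refine stein_interpolation hφ (differentiable_interpolant a b c).diffContOnCl
    (bddAbove_norm_interpolant a b c) (fun z => norm_interpolant_le_one a b c)
    (fun z hz => ?_) (hX.rpow X _) hs (hXinv.trans ?_)
  · rw [apply_star_interpolant_mul_self hφ c ha hb hz]
    exact hτ _ (by rw [div_ofNat_re, hz])
  · rw [CFC.rpow_rpow X _ _ (neg_ne_zero.mpr (inv_ne_zero hs.1.ne')), neg_mul,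
      inv_mul_cancel₀ hs.1.ne']

end Interpolation

section PartialTrace

open scoped Kronecker

variable {l m n R : Type*}

section TraceLeft

variable [Fintype m]

/-- The partial trace over the left tensor factor. -/
def traceLeft [AddCommMonoid R] (M : Matrix (m × n) (m × n) R) : Matrix n n R :=
  ∑ i, M.submatrix (Prod.mk i) (Prod.mk i)

theorem traceLeft_apply [AddCommMonoid R] (M : Matrix (m × n) (m × n) R) (j k : n) :
    traceLeft M j k = ∑ i, M (i, j) (i, k) := by
  simp only [traceLeft, Matrix.sum_apply, Matrix.submatrix_apply]

theorem trace_traceLeft [Fintype n] [AddCommMonoid R] (M : Matrix (m × n) (m × n) R) :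
    (traceLeft M).trace = M.trace := by
  simp only [Matrix.trace, Matrix.diag, traceLeft_apply, Fintype.sum_prod_type_right]

theorem traceLeft_mul_one_kronecker [Fintype n] [DecidableEq m] [NonAssocSemiring R]
    (M : Matrix (m × n) (m × n) R) (N : Matrix n n R) :
    traceLeft (M * (1 ⊗ₖ N)) = traceLeft M * N := by
  ext j k
  simp only [traceLeft_apply, Matrix.mul_apply, Matrix.kroneckerMap_apply, Matrix.one_apply,
    Fintype.sum_prod_type, ite_mul, one_mul, zero_mul, mul_ite, mul_zero, Finset.sum_ite_irrel,
    Finset.sum_const_zero, Finset.sum_ite_eq', Finset.mem_univ, if_true, Finset.sum_mul]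
  exact Finset.sum_comm

theorem posDef_traceLeft [Finite n] [Nonempty m] {M : Matrix (m × n) (m × n) ℂ} (hM : M.PosDef) :
    (traceLeft M).PosDef :=
  Matrix.posDef_sum Finset.univ_nonempty fun i _ => hM.submatrix (Prod.mk_right_injective i)

end TraceLeft

/-- The ampliation `N ↦ 1 ⊗ₖ N`, bundled as a ⋆-homomorphism in order to commute with the functional
calculus. -/
def oneKronecker (m n R : Type*) [Fintype m] [Fintype n] [DecidableEq m] [DecidableEq n]
    [CommSemiring R] [StarRing R] : Matrix n n R →⋆ₐ[R] Matrix (m × n) (m × n) R where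
  toFun N := 1 ⊗ₖ N
  map_one' := Matrix.one_kronecker_one
  map_mul' M N := by rw [← Matrix.mul_kronecker_mul, one_mul]
  map_zero' := Matrix.kronecker_zero _
  map_add' := Matrix.kronecker_add _
  commutes' r := by
    simp only [Algebra.algebraMap_eq_smul_one, Matrix.kronecker_smul, Matrix.one_kronecker_one]
  map_star' N := by
    simp only [Matrix.star_eq_conjTranspose, Matrix.conjTranspose_kronecker,
      Matrix.conjTranspose_one]

/-- The matrix `ρ` with its first two tensor factors exchanged. -/
def swapFactors (ρ : Matrix (l × m × n) (l × m × n) R) : Matrix (m × l × n) (m × l × n) R :=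
  ρ.submatrix (fun x => (x.2.1, x.1, x.2.2)) fun x => (x.2.1, x.1, x.2.2)

theorem posDef_swapFactors {ρ : Matrix (l × m × n) (l × m × n) ℂ} (hρ : ρ.PosDef) :
    (swapFactors ρ).PosDef := by
  refine hρ.submatrix ?_
  rintro ⟨i, j, k⟩ ⟨i', j', k'⟩ h
  simp_all only [Prod.mk.injEq]

theorem traceLeft_traceLeft_swapFactors [Fintype l] [Fintype m] [AddCommMonoid R]
    (ρ : Matrix (l × m × n) (l × m × n) R) :
    traceLeft (traceLeft (swapFactors ρ)) = traceLeft (traceLeft ρ) := by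
  ext j k
  simp only [traceLeft_apply, swapFactors, Matrix.submatrix_apply]
  exact Finset.sum_comm

theorem traceLeft_swapFactors_one_kronecker [Fintype l] [DecidableEq m] [NonAssocSemiring R]
    (M : Matrix (l × n) (l × n) R) :
    traceLeft (swapFactors ((1 : Matrix m m R) ⊗ₖ M)) = 1 ⊗ₖ traceLeft M := by
  ext j k
  simp only [traceLeft_apply, swapFactors, Matrix.submatrix_apply, Matrix.kroneckerMap_apply,
    Finset.mul_sum]

/-- The operator `I_A ⊗ ρ_BC`, for `ρ` on `A ⊗ B ⊗ C`. -/
def marginalBC [Fintype l] [DecidableEq l] [NonAssocSemiring R]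
    (ρ : Matrix (l × m × n) (l × m × n) R) :
    Matrix (l × m × n) (l × m × n) R :=
  1 ⊗ₖ traceLeft ρ

/-- The operator `ρ_AC ⊗ I_B`, for `ρ` on `A ⊗ B ⊗ C`: the operator `I_B ⊗ ρ_AC` with its factors
put back in order. -/
def marginalAC [Fintype m] [DecidableEq m] [NonAssocSemiring R]
    (ρ : Matrix (l × m × n) (l × m × n) R) :
    Matrix (l × m × n) (l × m × n) R :=
  swapFactors (marginalBC (swapFactors ρ))

/-- The operator `I_A ⊗ I_B ⊗ ρ_C`, for `ρ` on `A ⊗ B ⊗ C`. -/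
def marginalC [Fintype l] [Fintype m] [DecidableEq l] [DecidableEq m] [NonAssocSemiring R]
    (ρ : Matrix (l × m × n) (l × m × n) R) :
    Matrix (l × m × n) (l × m × n) R :=
  1 ⊗ₖ (1 ⊗ₖ traceLeft (traceLeft ρ))

section PosDef

variable [Finite n]

theorem posDef_marginalBC [Fintype l] [Finite m] [DecidableEq l] [Nonempty l]
    {ρ : Matrix (l × m × n) (l × m × n) ℂ} (hρ : ρ.PosDef) :
    (marginalBC ρ).PosDef :=
  .kronecker .one (posDef_traceLeft hρ)

theorem posDef_marginalAC [Finite l] [Fintype m] [DecidableEq m] [Nonempty m]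
    {ρ : Matrix (l × m × n) (l × m × n) ℂ} (hρ : ρ.PosDef) :
    (marginalAC ρ).PosDef :=
  posDef_swapFactors (posDef_marginalBC (posDef_swapFactors hρ))

theorem posDef_marginalC [Fintype l] [Fintype m] [DecidableEq l] [DecidableEq m] [Nonempty l]
    [Nonempty m]
    {ρ : Matrix (l × m × n) (l × m × n) ℂ} (hρ : ρ.PosDef) :
    (marginalC ρ).PosDef :=
  .kronecker .one (.kronecker .one (posDef_traceLeft (posDef_traceLeft hρ)))

end PosDef

theorem trace_marginalAC_mul_mul_marginalBC_mul [Fintype l] [Fintype m] [Fintype n]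
    [DecidableEq l] [DecidableEq m] [CommSemiring R] (ρ : Matrix (l × m × n) (l × m × n) R)
    (M N : Matrix n n R) :
    (marginalAC ρ * (1 ⊗ₖ (1 ⊗ₖ M)) * marginalBC ρ * (1 ⊗ₖ (1 ⊗ₖ N))).trace =
      (traceLeft (traceLeft ρ) * M * traceLeft (traceLeft ρ) * N).trace := by
  set C := traceLeft (traceLeft ρ)
  have hAC : traceLeft (marginalAC ρ) = 1 ⊗ₖ C := by
    rw [marginalAC, marginalBC, traceLeft_swapFactors_one_kronecker,
      traceLeft_traceLeft_swapFactors]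
  calc (marginalAC ρ * (1 ⊗ₖ (1 ⊗ₖ M)) * marginalBC ρ * (1 ⊗ₖ (1 ⊗ₖ N))).trace
      = ((1 ⊗ₖ (C * M)) * (traceLeft ρ * (1 ⊗ₖ N))).trace := by
        rw [← trace_traceLeft, marginalBC, traceLeft_mul_one_kronecker,
          traceLeft_mul_one_kronecker, traceLeft_mul_one_kronecker, hAC,
          ← Matrix.mul_kronecker_mul, one_mul, mul_assoc]
    _ = (traceLeft ρ * (1 ⊗ₖ (N * (C * M)))).trace := by
        rw [Matrix.trace_mul_comm, mul_assoc, ← Matrix.mul_kronecker_mul, one_mul]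
    _ = (C * (N * (C * M))).trace := by
        rw [← trace_traceLeft, traceLeft_mul_one_kronecker]
    _ = (C * M * C * N).trace := by
        rw [← mul_assoc C N, Matrix.trace_mul_comm, ← mul_assoc (C * M)]

end PartialTrace

section MapComplexPower

open scoped CStarAlgebra

variable {A B : Type*} [CStarAlgebra A] [CStarAlgebra B]

theorem map_complexPower [PartialOrder A] [StarOrderedRing A] (f : A →⋆ₐ[ℂ] B) {a : A}
    (ha : IsStrictlyPositive a) (z : ℂ) : f (complexPower a z) = complexPower (f a) z := by
  let _ : NormedAlgebra ℚ A := .restrictScalars ℚ ℂ A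
  let _ : NormedAlgebra ℚ B := .restrictScalars ℚ ℂ B
  have hf : Continuous f := map_continuous f
  have hlog : f (CFC.log a) = CFC.log (f a) :=
    f.map_cfc Real.log a (Real.continuousOn_log.mono fun x hx => (ha.spectrum_pos hx).ne') hf
      ha.isSelfAdjoint (ha.isSelfAdjoint.map f)
  rw [complexPower, NormedSpace.map_exp f hf, map_smul, hlog, complexPower]

end MapComplexPower

section MatrixAlgebra

open scoped Matrix.Norms.L2Operator MatrixOrder Kronecker

variable {l m n : Type*} [Fintype l] [Fintype m] [Fintype n] [DecidableEq l] [DecidableEq m]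
  [DecidableEq n]

theorem ofReal_cfcRpow {x : ℝ} (hx : 0 < x) (t : ℝ) : (x : ℂ) ^ t = ((x ^ t : ℝ) : ℂ) :=
  CFC.rpow_algebraMap (A := ℂ) (x := ⟨x, hx.le⟩) (y := t)

theorem mpow_eq_rpow {M : Matrix n n ℂ} (hM : M.PosDef) (t : ℝ) : mpow M t = M ^ t := by
  have hpos := hM.isStrictlyPositive
  rw [CFC.rpow_eq_cfc_real, hM.isHermitian.cfc_eq, Matrix.IsHermitian.cfc, mpow,
    dif_pos hM.isHermitian, Unitary.conjStarAlgAut_apply]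
  congr 3
  ext i
  rw [if_neg (hM.eigenvalues_pos i).ne']
  exact ofReal_cfcRpow (hM.eigenvalues_pos i) t

theorem complexPower_one_kronecker {M : Matrix n n ℂ} (hM : M.PosDef) (z : ℂ) :
    complexPower ((1 : Matrix m m ℂ) ⊗ₖ M) z = 1 ⊗ₖ complexPower M z :=
  (map_complexPower (oneKronecker m n ℂ) hM.isStrictlyPositive z).symm

theorem complexPower_marginalC [Nonempty l] [Nonempty m] {ρ : Matrix (l × m × n) (l × m × n) ℂ}
    (hρ : ρ.PosDef) (z : ℂ) :
    complexPower (marginalC ρ) z = 1 ⊗ₖ (1 ⊗ₖ complexPower (traceLeft (traceLeft ρ)) z) := by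
  have hC : (traceLeft (traceLeft ρ)).PosDef := posDef_traceLeft (posDef_traceLeft hρ)
  rw [marginalC, complexPower_one_kronecker (.kronecker .one hC), complexPower_one_kronecker hC]

theorem trace_complexPower_marginals [Nonempty l] [Nonempty m]
    {ρ : Matrix (l × m × n) (l × m × n) ℂ} (hρ : ρ.PosDef) {w : ℂ} (hw : w.re = 1 / 2) :
    (marginalAC ρ * complexPower (marginalC ρ) (-star w) * marginalBC ρ *
      complexPower (marginalC ρ) (-w)).trace = ρ.trace := by
  rw [complexPower_marginalC hρ, complexPower_marginalC hρ,
    trace_marginalAC_mul_mul_marginalBC_mul]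
  set C := traceLeft (traceLeft ρ) with hCdef
  have hC : IsStrictlyPositive C :=
    (posDef_traceLeft (posDef_traceLeft hρ)).isStrictlyPositive
  have hexp : 1 + -star w + 1 + -w = 1 := by
    have hconj : w + star w = 1 := by
      rw [Complex.star_def, Complex.add_conj, hw, mul_one_div_cancel two_ne_zero,
        Complex.ofReal_one]
    linear_combination -hconj
  have hpow : complexPower C 1 * complexPower C (-star w) * complexPower C 1 *
      complexPower C (-w) = complexPower C 1 := by
    rw [← complexPower_add, ← complexPower_add, ← complexPower_add, hexp]
  rw [complexPower_one hC] at hpow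
  rw [hpow, hCdef, trace_traceLeft, trace_traceLeft]

theorem trace_rpow_sandwich_marginals_le [Nonempty l] [Nonempty m]
    {ρ : Matrix (l × m × n) (l × m × n) ℂ} (hρ : ρ.PosDef) {s : ℝ} (hs : s ∈ Set.Ioo 0 1) :
    ((marginalAC ρ ^ (-(s / 2)) * marginalC ρ ^ (s / 2) * marginalBC ρ ^ (-s) *
      marginalC ρ ^ (s / 2) * marginalAC ρ ^ (-(s / 2))) ^ (-s⁻¹)).trace ≤ ρ.trace := by
  have hAC := (posDef_marginalAC hρ).isStrictlyPositive
  have hBC := (posDef_marginalBC hρ).isStrictlyPositive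
  have hC := (posDef_marginalC hρ).isStrictlyPositive
  have hX := isStrictlyPositive_rpow_sandwich hAC hBC hC (-(s / 2)) (s / 2) (-s)
  let φ : Matrix (l × m × n) (l × m × n) ℂ →ₚ[ℂ] ℂ := Matrix.tracePositiveLinearMap _ ℂ ℂ
  have him := (Complex.nonneg_iff.mp (φ.map_nonneg (hX.rpow _ (-s⁻¹)).nonneg)).2
  have himρ := (Complex.nonneg_iff.mp (φ.map_nonneg hρ.isStrictlyPositive.nonneg)).2
  refine Complex.le_def.mpr ⟨?_, him.symm.trans himρ⟩
  exact re_apply_rpow_sandwich_le (φ := φ) Matrix.trace_mul_comm hAC hBC hC hs fun w hw =>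
    (congrArg Complex.re (trace_complexPower_marginals hρ hw)).le

theorem stmt_8_general (ρ : Matrix (l × m × n) (l × m × n) ℂ) (hρ : ρ.PosDef) {α : ℝ}
    (hα : 1 < α) :
    (mpow (mpow (marginalAC ρ) ((1 - α) / (2 * α)) * mpow (marginalC ρ) ((α - 1) / (2 * α)) *
      mpow (marginalBC ρ) ((1 - α) / α) * mpow (marginalC ρ) ((α - 1) / (2 * α)) *
      mpow (marginalAC ρ) ((1 - α) / (2 * α))) (α / (1 - α))).trace ≤ ρ.trace := by
  rcases isEmpty_or_nonempty (l × m × n) with hempty | ⟨i, j, -⟩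
  · simp only [Matrix.trace, Finset.univ_eq_empty, Finset.sum_empty, le_refl]
  have : Nonempty l := ⟨i⟩
  have : Nonempty m := ⟨j⟩
  have hα0 : 0 < α := zero_lt_one.trans hα
  have hs : (α - 1) / α ∈ Set.Ioo 0 1 :=
    ⟨div_pos (sub_pos.mpr hα) hα0, (div_lt_one hα0).mpr (sub_lt_self α one_pos)⟩
  have hhalf : (α - 1) / (2 * α) = (α - 1) / α / 2 := by rw [div_div, mul_comm]
  have hneg : (1 - α) / α = -((α - 1) / α) := by rw [← neg_sub, neg_div]
  have hneghalf : (1 - α) / (2 * α) = -((α - 1) / α / 2) := by rw [← hhalf, ← neg_sub, neg_div]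
  have hinv : α / (1 - α) = -((α - 1) / α)⁻¹ := by rw [inv_div, ← neg_sub, div_neg]
  have hAC := posDef_marginalAC hρ
  have hBC := posDef_marginalBC hρ
  have hC := posDef_marginalC hρ
  rw [mpow_eq_rpow hAC, mpow_eq_rpow hBC, mpow_eq_rpow hC, hhalf, hneg, hneghalf, hinv,
    mpow_eq_rpow (Matrix.isStrictlyPositive_iff_posDef.mp (isStrictlyPositive_rpow_sandwich
      hAC.isStrictlyPositive hBC.isStrictlyPositive hC.isStrictlyPositive _ _ _))]
  exact trace_rpow_sandwich_marginals_le hρ hs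

end MatrixAlgebra

section Reductions

variable {dA dB dC : ℕ} (ρ : Matrix (Fin dA × Fin dB × Fin dC) (Fin dA × Fin dB × Fin dC) ℂ)

theorem redAC_eq_marginalAC : redAC ρ = marginalAC ρ := by
  ext x y
  simp only [redAC, marginalAC, marginalBC, swapFactors, Matrix.submatrix_apply,
    Matrix.kroneckerMap_apply, Matrix.one_apply, traceLeft_apply]

theorem redBC_eq_marginalBC : redBC ρ = marginalBC ρ := by
  ext x y
  simp only [redBC, marginalBC, Matrix.kroneckerMap_apply, Matrix.one_apply, traceLeft_apply]

theorem redC_eq_marginalC : redC ρ = marginalC ρ := by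
  ext x y
  simp only [redC, marginalC, Matrix.kroneckerMap_apply, Matrix.one_apply, traceLeft_apply,
    mul_assoc]
  rw [Finset.sum_comm]

end Reductions

theorem stmt_8 {dA dB dC : ℕ}
    (ρ : Matrix (Fin dA × Fin dB × Fin dC) (Fin dA × Fin dB × Fin dC) ℂ)
    (hρ : ρ.PosDef) (hρ1 : ρ.trace = 1)
    (α : ℝ) (hα : α ∈ Set.Ioi (1:ℝ)) :
    (mpow (mpow (redAC ρ) ((1 - α)/(2*α)) * mpow (redC ρ) ((α - 1)/(2*α)) *
        mpow (redBC ρ) ((1 - α)/α) * mpow (redC ρ) ((α - 1)/(2*α)) *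
        mpow (redAC ρ) ((1 - α)/(2*α))) (α/(1 - α))).trace ≤ 1 := by
  rw [redAC_eq_marginalAC, redBC_eq_marginalBC, redC_eq_marginalC, ← hρ1]
  exact stmt_8_general ρ hρ hα
end
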